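/- There is no function w ∈ L¹_loc(ℝ) such that w is odd, lim_{h→0⁺}(1/h)∫₀^h w = 1, and the distributional derivative ∂_x w satisfies ∂_x w ≤ C in D'(ℝ) for some constant C > 0. Equivalently: if v ∈ L^∞(ℝ) is odd with Lebesgue-point right trace lim_{h→0⁺}(1/h)∫₀^h v = 1 at 0, then for every c > 0 the distributional inequality ∂_x v ≤ 1/c in D'(ℝ) fails. -/

import Mathlib

open MeasureTheory Set Filter Topology

open scoped ContDiff Convolution

/-!
If `∂ₓv ≤ C`, testing against the sliding integral `∫_{x-h}^x ψ` of a nonnegative `ψ ∈ C_c^∞`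
moves the difference onto `v`: `∫ (v(x+h) - v(x)) ψ(x) dx ≤ C h ∫ ψ`. Hence `v(x+h) ≤ v(x) + C h`
almost everywhere. Integrating this over `(a-h, a)`, dividing by `h` and letting `h → 0⁺` shows
that the right trace of `v` at `a` is at most its left trace: `v` can only jump downwards. An odd
function with right trace `1` at the origin has left trace `-1` there, so it jumps upwards.
-/

lemma locallyIntegrable_of_ae_norm_le {X F : Type*} [TopologicalSpace X] [MeasurableSpace X]
    [NormedAddCommGroup F] {μ : Measure X} [IsLocallyFiniteMeasure μ] {f : X → F}
    (hf : AEStronglyMeasurable f μ) {M : ℝ} (hM : ∀ᵐ x ∂μ, ‖f x‖ ≤ M) : LocallyIntegrable f μ :=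
  (memLp_top_of_bound hf M hM).locallyIntegrable le_top

lemma locallyIntegrable_comp_add_right {G F : Type*} [AddGroup G] [TopologicalSpace G]
    [ContinuousAdd G] [MeasurableSpace G] [BorelSpace G] [NormedAddCommGroup F] {μ : Measure G}
    [μ.IsAddRightInvariant] {f : G → F} (hf : LocallyIntegrable f μ) (h : G) :
    LocallyIntegrable (fun x ↦ f (x + h)) μ := by
  refine (locallyIntegrable_map_homeomorph (Homeomorph.addRight h)).1 ?_
  rwa [Homeomorph.coe_addRight, map_add_right_eq_self]

lemma ae_le_of_integral_contDiff_mul_le {E : Type*} [NormedAddCommGroup E] [NormedSpace ℝ E]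
    [FiniteDimensional ℝ E] [MeasurableSpace E] [BorelSpace E] {μ : Measure E}
    [μ.IsAddHaarMeasure] {f g : E → ℝ} (hf : LocallyIntegrable f μ) (hg : LocallyIntegrable g μ)
    (hfg : ∀ ψ : E → ℝ, ContDiff ℝ ∞ ψ → HasCompactSupport ψ → (∀ x, 0 ≤ ψ x) →
      ∫ x, ψ x * f x ∂μ ≤ ∫ x, ψ x * g x ∂μ) :
    f ≤ᵐ[μ] g := by
  obtain ⟨u, -, hu_pos, hu_lim⟩ := exists_seq_strictAnti_tendsto (0 : ℝ)
  let ρ (n : ℕ) : ContDiffBump (0 : E) := ⟨u n, 2 * u n, hu_pos n, by linarith [hu_pos n]⟩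
  have hρ_lim : Tendsto (fun n ↦ (ρ n).rOut) atTop (𝓝 0) := by
    simpa only [mul_zero] using hu_lim.const_mul 2
  have hρ_ratio : ∀ᶠ n in atTop, (ρ n).rOut ≤ 2 * (ρ n).rIn := .of_forall fun _ ↦ le_rfl
  filter_upwards [ContDiffBump.ae_convolution_tendsto_right_of_locallyIntegrable hρ_lim hρ_ratio hf,
    ContDiffBump.ae_convolution_tendsto_right_of_locallyIntegrable hρ_lim hρ_ratio hg]
    with x hfx hgx
  refine le_of_tendsto_of_tendsto' hfx hgx fun n ↦ ?_
  simp only [convolution_eq_swap, ContinuousLinearMap.lsmul_apply, smul_eq_mul]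
  exact hfg (fun y ↦ (ρ n).normed μ (x - y)) ((ρ n).contDiff_normed.comp (by fun_prop))
    ((ρ n).hasCompactSupport_normed.comp_homeomorph (Homeomorph.subLeft x))
    fun y ↦ (ρ n).nonneg_normed _

section SlidingIntegral

variable {E : Type*} [NormedAddCommGroup E] [NormedSpace ℝ E] {ψ : ℝ → E}

/-- The integral of `ψ` over the window of length `h` ending at `x`, as a function of `x`. -/
noncomputable def slidingIntegral (h : ℝ) (ψ : ℝ → E) (x : ℝ) : E :=
  ∫ t in (x - h)..x, ψ t

lemma slidingIntegral_nonneg {ψ : ℝ → ℝ} (hψ : ∀ x, 0 ≤ ψ x) {h : ℝ} (hh : 0 ≤ h) (x : ℝ) :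
    0 ≤ slidingIntegral h ψ x :=
  intervalIntegral.integral_nonneg (sub_le_self x hh) fun t _ ↦ hψ t

lemma slidingIntegral_eq_convolution {h : ℝ} (hh : 0 ≤ h) :
    slidingIntegral h ψ
      = (Ioc 0 h).indicator (fun _ ↦ (1 : ℝ)) ⋆[ContinuousLinearMap.lsmul ℝ ℝ] ψ := by
  ext x
  calc slidingIntegral h ψ x
    _ = ∫ t in (0 : ℝ)..h, ψ (x - t) := by
      rw [intervalIntegral.integral_comp_sub_left, sub_zero, slidingIntegral]
    _ = ∫ t, (Ioc 0 h).indicator (fun t ↦ ψ (x - t)) t := by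
      rw [intervalIntegral.integral_of_le hh, integral_indicator measurableSet_Ioc]
    _ = ((Ioc 0 h).indicator (fun _ ↦ (1 : ℝ)) ⋆[ContinuousLinearMap.lsmul ℝ ℝ] ψ) x := by
      simp only [convolution_def, ContinuousLinearMap.lsmul_apply, indicator_apply, ite_smul,
        one_smul, zero_smul]

lemma hasCompactSupport_slidingIntegral (hψ : HasCompactSupport ψ) {h : ℝ} (hh : 0 ≤ h) :
    HasCompactSupport (slidingIntegral h ψ) := by
  rw [slidingIntegral_eq_convolution hh]
  refine HasCompactSupport.convolution _ ?_ hψ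
  exact .intro isCompact_Icc fun x hx ↦ indicator_of_notMem (fun h ↦ hx (Ioc_subset_Icc_self h)) _

variable [CompleteSpace E]

lemma integral_slidingIntegral (hψ : Integrable ψ) {h : ℝ} (hh : 0 ≤ h) :
    ∫ x, slidingIntegral h ψ x = h • ∫ x, ψ x := by
  have hind : Integrable ((Ioc 0 h).indicator fun _ ↦ (1 : ℝ)) :=
    (integrableOn_const (by simp)).integrable_indicator measurableSet_Ioc
  rw [slidingIntegral_eq_convolution hh, integral_convolution _ hind hψ]
  simp [integral_indicator measurableSet_Ioc, hh]

lemma hasDerivAt_slidingIntegral (hψ : Continuous ψ) (h x : ℝ) :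
    HasDerivAt (slidingIntegral h ψ) (ψ x - ψ (x - h)) x := by
  have hint (b c : ℝ) : IntervalIntegrable ψ volume b c := hψ.intervalIntegrable b c
  have hprim (y : ℝ) : HasDerivAt (fun y ↦ ∫ t in (0 : ℝ)..y, ψ t) (ψ y) y :=
    hψ.integral_hasStrictDerivAt 0 y |>.hasDerivAt
  refine ((hprim x).sub ((hprim (x - h)).comp_sub_const x h)).congr_of_eventuallyEq ?_
  exact .of_forall fun y ↦ (intervalIntegral.integral_interval_sub_left (hint _ _) (hint _ _)).symm

lemma contDiff_slidingIntegral {n : ℕ∞} (hψ : ContDiff ℝ n ψ) (h : ℝ) :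
    ContDiff ℝ (n + 1) (slidingIntegral h ψ) := by
  have hderiv := hasDerivAt_slidingIntegral hψ.continuous h
  rw [contDiff_succ_iff_deriv, funext fun x ↦ (hderiv x).deriv]
  exact ⟨fun x ↦ (hderiv x).differentiableAt, by simp, hψ.sub (hψ.comp (by fun_prop))⟩

end SlidingIntegral

/-- The one-sided bound `∂ₓv ≤ C` in the sense of distributions on `ℝ`, tested against nonnegative
`φ ∈ C_c^∞(ℝ)`. It has this meaning only for locally integrable `v`: otherwise `∫ v ∂ₓφ` may be
the junk value `0`. -/
def DistribDerivLE (v : ℝ → ℝ) (C : ℝ) : Prop :=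
  ∀ φ : ℝ → ℝ, ContDiff ℝ ∞ φ → HasCompactSupport φ → (∀ x, 0 ≤ φ x) →
    -(∫ x, v x * deriv φ x) ≤ C * ∫ x, φ x

/-- The right trace of `v` at `a` is `r`, as the limit of the averages over `(a, a + h]`. -/
def HasRightTrace (v : ℝ → ℝ) (a r : ℝ) : Prop :=
  Tendsto (fun h ↦ (1 / h) * ∫ x in Ioc a (a + h), v x) (𝓝[>] 0) (𝓝 r)

/-- The left trace of `v` at `a` is `l`, as the limit of the averages over `(a - h, a]`. -/
def HasLeftTrace (v : ℝ → ℝ) (a l : ℝ) : Prop :=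
  Tendsto (fun h ↦ (1 / h) * ∫ x in Ioc (a - h) a, v x) (𝓝[>] 0) (𝓝 l)

namespace DistribDerivLE

variable {v : ℝ → ℝ} {C : ℝ}

lemma integral_mul_comp_add_le (hC : DistribDerivLE v C) (hv : LocallyIntegrable v) {h : ℝ}
    (hh : 0 ≤ h) {ψ : ℝ → ℝ} (hψ : ContDiff ℝ ∞ ψ) (hψc : HasCompactSupport ψ)
    (hψ0 : ∀ x, 0 ≤ ψ x) :
    ∫ x, ψ x * v (x + h) ≤ ∫ x, ψ x * (v x + C * h) := by
  have hψ_int : Integrable ψ := hψ.continuous.integrable_of_hasCompactSupport hψc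
  have hψv_int : Integrable fun x ↦ ψ x * v x :=
    hv.integrable_smul_left_of_hasCompactSupport hψ.continuous hψc
  have hψv_shift_int : Integrable fun x ↦ ψ (x - h) * v x := by
    simpa only [sub_add_cancel, smul_eq_mul] using ((locallyIntegrable_comp_add_right hv
      h).integrable_smul_left_of_hasCompactSupport hψ.continuous hψc).comp_sub_right h
  have htest : -(∫ x, v x * (ψ x - ψ (x - h))) ≤ C * (h * ∫ x, ψ x) := by
    have := hC _ ((contDiff_slidingIntegral hψ h).of_le le_self_add)
      (hasCompactSupport_slidingIntegral hψc hh) (slidingIntegral_nonneg hψ0 hh)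
    rwa [integral_slidingIntegral hψ_int hh,
      funext fun x ↦ (hasDerivAt_slidingIntegral hψ.continuous h x).deriv] at this
  have hdiff : ∫ x, v x * (ψ x - ψ (x - h)) = (∫ x, ψ x * v x) - ∫ x, ψ x * v (x + h) := by
    calc ∫ x, v x * (ψ x - ψ (x - h))
      _ = (∫ x, ψ x * v x) - ∫ x, ψ (x - h) * v x := by
        rw [← integral_sub hψv_int hψv_shift_int]
        congr 1 with x
        ring
      _ = (∫ x, ψ x * v x) - ∫ x, ψ x * v (x + h) := by
        rw [← integral_add_right_eq_self (fun x ↦ ψ (x - h) * v x) h]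
        simp only [add_sub_cancel_right]
  have hsum : ∫ x, ψ x * (v x + C * h) = (∫ x, ψ x * v x) + (∫ x, ψ x) * (C * h) := by
    simp only [mul_add]
    rw [integral_add hψv_int (hψ_int.mul_const _), integral_mul_const]
  linarith

lemma ae_comp_add_le (hC : DistribDerivLE v C) (hv : LocallyIntegrable v) {h : ℝ} (hh : 0 ≤ h) :
    ∀ᵐ x, v (x + h) ≤ v x + C * h :=
  ae_le_of_integral_contDiff_mul_le (locallyIntegrable_comp_add_right hv h)
    (hv.add (locallyIntegrable_const _)) fun _ ↦ hC.integral_mul_comp_add_le hv hh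

lemma setIntegral_Ioc_add_le (hC : DistribDerivLE v C) (hv : LocallyIntegrable v) (a : ℝ) {h : ℝ}
    (hh : 0 ≤ h) :
    ∫ x in Ioc a (a + h), v x ≤ (∫ x in Ioc (a - h) a, v x) + C * h * h := by
  have hint (w : ℝ → ℝ) (hw : LocallyIntegrable w) (b c : ℝ) : IntervalIntegrable w volume b c :=
    (hw.integrableOn_isCompact isCompact_uIcc).intervalIntegrable
  rw [← intervalIntegral.integral_of_le (by linarith), ← intervalIntegral.integral_of_le
    (by linarith)]
  calc ∫ x in a..(a + h), v x
    _ = ∫ x in (a - h)..a, v (x + h) := by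
      rw [intervalIntegral.integral_comp_add_right, sub_add_cancel]
    _ ≤ ∫ x in (a - h)..a, (v x + C * h) :=
      intervalIntegral.integral_mono_ae (by linarith)
        (hint _ (locallyIntegrable_comp_add_right hv h) _ _)
        (hint _ (hv.add (locallyIntegrable_const _)) _ _) (hC.ae_comp_add_le hv hh)
    _ = (∫ x in (a - h)..a, v x) + C * h * h := by
      rw [intervalIntegral.integral_add (hint v hv _ _) intervalIntegrable_const,
        intervalIntegral.integral_const, sub_sub_cancel, smul_eq_mul, mul_comm h]

lemma rightTrace_le_leftTrace (hC : DistribDerivLE v C) (hv : LocallyIntegrable v) {a l r : ℝ}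
    (hl : HasLeftTrace v a l) (hr : HasRightTrace v a r) : r ≤ l := by
  have herror : Tendsto (fun h ↦ C * h) (𝓝[>] 0) (𝓝 0) :=
    (Continuous.tendsto' (by fun_prop) 0 0 (mul_zero C)).mono_left nhdsWithin_le_nhds
  rw [← add_zero l]
  refine le_of_tendsto_of_tendsto hr (hl.add herror) ?_
  filter_upwards [self_mem_nhdsWithin] with h (hh : 0 < h)
  calc (1 / h) * ∫ x in Ioc a (a + h), v x
    _ ≤ (1 / h) * ((∫ x in Ioc (a - h) a, v x) + C * h * h) := by
      gcongr
      exact hC.setIntegral_Ioc_add_le hv a hh.le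
    _ = (1 / h) * (∫ x in Ioc (a - h) a, v x) + C * h := by field_simp

end DistribDerivLE

lemma HasRightTrace.hasLeftTrace_neg_of_odd {v : ℝ → ℝ} {a r : ℝ} (hr : HasRightTrace v a r)
    (hodd : ∀ x, v (-x) = -v x) : HasLeftTrace v (-a) (-r) := by
  refine hr.neg.congr' ?_
  filter_upwards [self_mem_nhdsWithin] with h (hh : 0 < h)
  have hreflect : ∫ x in Ioc (-a - h) (-a), v x = -∫ x in Ioc a (a + h), v x := by
    rw [← intervalIntegral.integral_of_le (by linarith), ← intervalIntegral.integral_of_le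
      (by linarith), ← neg_add', ← intervalIntegral.integral_comp_neg]
    simp only [hodd, intervalIntegral.integral_neg]
  rw [hreflect, mul_neg]

theorem jump_violates_oleinik_general {v : ℝ → ℝ} (hv : LocallyIntegrable v) {a l r : ℝ}
    (hl : HasLeftTrace v a l) (hr : HasRightTrace v a r) (hlr : l < r) (C : ℝ) :
    ¬ DistribDerivLE v C :=
  fun hC ↦ hlr.not_ge (hC.rightTrace_le_leftTrace hv hl hr)

/-- the jump at the origin violates every one-sided Oleĭnik bound.
If `v ∈ L^∞(ℝ)` is odd with Lebesgue-point right trace `lim_{h→0⁺} (1/h)∫₀^h v = 1` at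
the origin, then for every `c > 0` the distributional inequality `∂_x v ≤ 1/c` in
`D'(ℝ)` fails; i.e. it is not true that `-∫ v ∂_x φ ≤ (1/c) ∫ φ` for every nonnegative
`φ ∈ C_c^∞(ℝ)`. -/
theorem jump_violates_oleinik
    (v : ℝ → ℝ) (hmeas : Measurable v)
    (hbdd : ∃ M : ℝ, ∀ᵐ x : ℝ, |v x| ≤ M)
    (hodd : ∀ x : ℝ, v (-x) = -v x)
    (htrace : Tendsto (fun h : ℝ => (1 / h) * ∫ x in Set.Ioc 0 h, v x)
      (nhdsWithin 0 (Set.Ioi 0)) (nhds 1)) :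
    ∀ c > (0 : ℝ),
      ¬ (∀ φ : ℝ → ℝ, ContDiff ℝ (⊤ : ℕ∞) φ → HasCompactSupport φ → (∀ x, 0 ≤ φ x) →
          -(∫ x : ℝ, v x * deriv φ x) ≤ (1 / c) * ∫ x : ℝ, φ x) := by
  have hr : HasRightTrace v 0 1 := by simpa only [HasRightTrace, zero_add] using htrace
  have hl : HasLeftTrace v 0 (-1) := by simpa only [neg_zero] using hr.hasLeftTrace_neg_of_odd hodd
  obtain ⟨M, hM⟩ := hbdd
  have hv : LocallyIntegrable v := locallyIntegrable_of_ae_norm_le hmeas.aestronglyMeasurable hM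
  exact fun c _ ↦ jump_violates_oleinik_general hv hl hr (by norm_num) (1 / c)
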